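/- Unique parameterization of multiplicative evaluation contexts: if P ∈ Em_{U,A} and P ∈ Em_{U',A'} then U = U' and A = A'. -/

import Mathlib

/-! ## Terms of the pure λ-calculus (named syntax) -/

inductive Term : Type
  | var : ℕ → Term
  | lam : ℕ → Term → Term
  | app : Term → Term → Term
  deriving DecidableEq

namespace Term

/-- Size of a term: |x| = 1, |λx.t| = |t|+1, |t u| = |t|+|u|+1. -/
def size : Term → ℕ
  | var _ => 1
  | lam _ t => size t + 1
  | app t u => size t + size u + 1

/-- Free variables of a term. -/
def fv : Term → Finset ℕ
  | var x => {x}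
  | lam x t => (fv t).erase x
  | app t u => fv t ∪ fv u

/-- Meta-level substitution t{x←u}. -/
def subst (x : ℕ) (u : Term) : Term → Term
  | var y => if y = x then u else var y
  | lam y t => if y = x then lam y t else lam y (subst x u t)
  | app t s => app (subst x u t) (subst x u s)

def isVarB : Term → Bool
  | var _ => true
  | _ => false

/-- Values are abstractions (variables are not values). -/
def IsValue (t : Term) : Prop := ∃ x u, t = lam x u

/-- Needed variables of a term. -/
def nv : Term → Finset ℕ
  | var x => {x}
  | lam _ _ => ∅
  | app t u => nv t ∪ nv u

/-- Applied variables of a term. -/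
def anv : Term → Finset ℕ
  | var _ => ∅
  | lam _ _ => ∅
  | app (var x) u => insert x (anv u)
  | app (lam y t) u => anv (lam y t) ∪ anv u
  | app (app t s) u => anv (app t s) ∪ anv u

/-- Unapplied variables of a term. -/
def unv : Term → Finset ℕ
  | var x => {x}
  | lam _ _ => ∅
  | app (var _) u => unv u
  | app (lam y t) u => unv (lam y t) ∪ unv u
  | app (app t s) u => unv (app t s) ∪ unv u

end Term

/-! ## Inert terms and fireballs: i ::= x | i f,  f ::= v | i -/

mutual
  inductive Term.Inert : Term → Prop
    | var (x : ℕ) : Term.Inert (Term.var x)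
    | app {i f : Term} : Term.Inert i → Term.Fireball f → Term.Inert (Term.app i f)
  inductive Term.Fireball : Term → Prop
    | val {x : ℕ} {t : Term} : Term.Fireball (Term.lam x t)
    | inert {i : Term} : Term.Inert i → Term.Fireball i
end

/-- Non-variable inert terms i⁺. -/
def Term.InertPlus (t : Term) : Prop := t.Inert ∧ ∀ x, t ≠ Term.var x

/-! ## β-reduction (closure of the root rule under arbitrary term contexts) -/

inductive Beta : Term → Term → Prop
  | beta (x : ℕ) (t u : Term) : Beta (Term.app (Term.lam x t) u) (Term.subst x u t)
  | lam {t t' : Term} (x : ℕ) : Beta t t' → Beta (Term.lam x t) (Term.lam x t')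
  | appL {t t' : Term} (u : Term) : Beta t t' → Beta (Term.app t u) (Term.app t' u)
  | appR {u u' : Term} (t : Term) : Beta u u' → Beta (Term.app t u) (Term.app t u')

/-- `iterRel R n a b`: an n-step R-reduction sequence from a to b. -/
def iterRel {α : Type} (R : α → α → Prop) : ℕ → α → α → Prop
  | 0 => Eq
  | n + 1 => fun a c => ∃ b, R a b ∧ iterRel R n b c

/-! ## Environments and programs -/

/-- Environments are finite lists of explicit substitutions, written
left-to-right, i.e. E[x←t] is `E ++ [(x, t)]`. -/
abbrev Env := List (ℕ × Term)

def Env.dom (E : Env) : Finset ℕ := (E.map Prod.fst).toFinset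

/-- Content of the leftmost explicit substitution on x. -/
def Env.lookupES : Env → ℕ → Option Term
  | [], _ => none
  | (y, t) :: E, x => if y = x then some t else Env.lookupES E x

structure Program where
  tm : Term
  env : Env

/-- p@[x←u] : appending an explicit substitution at the end of the environment. -/
def Program.appES (p : Program) (x : ℕ) (u : Term) : Program := ⟨p.tm, p.env ++ [(x, u)]⟩

/-- One step of the needed-variables computation along an explicit substitution. -/
def nvStep (V : Finset ℕ) (e : ℕ × Term) : Finset ℕ :=
  if e.1 ∈ V then (V.erase e.1) ∪ Term.nv e.2 else V

/-- Needed variables of a program. -/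
def Program.nv (p : Program) : Finset ℕ := p.env.foldl nvStep p.tm.nv

/-- One step of the applied-variables computation (carrying needed variables). -/
def anvStep : Finset ℕ × Finset ℕ → ℕ × Term → Finset ℕ × Finset ℕ
  | (N, A), (x, u) =>
    (nvStep N (x, u),
      if x ∈ N then
        match u with
        | Term.var y => if x ∈ A then (A.erase x) ∪ {y} else A.erase x
        | _ => (A.erase x) ∪ Term.anv u
      else A)

/-- Applied variables of a program. -/
def Program.anv (p : Program) : Finset ℕ :=
  (p.env.foldl anvStep (p.tm.nv, p.tm.anv)).2

/-- One step of the unapplied-variables computation (carrying needed variables). -/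
def unvStep : Finset ℕ × Finset ℕ → ℕ × Term → Finset ℕ × Finset ℕ
  | (N, U), (x, u) =>
    (nvStep N (x, u),
      if x ∈ U ∨ (x ∈ N ∧ u.isVarB = false) then (U.erase x) ∪ Term.unv u else U)

/-- Unapplied variables of a program. -/
def Program.unv (p : Program) : Finset ℕ :=
  (p.env.foldl unvStep (p.tm.nv, p.tm.unv)).2

/-- Unfolding of a program into a term: unf(t, ε) = t, unf(t, E[x←u]) = unf(t, E){x←u}. -/
def Program.unf (p : Program) : Term :=
  p.env.foldl (fun s e => Term.subst e.1 e.2 s) p.tm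

/-! ## Term contexts H ::= ⟨·⟩ | H t | i H (i inert, enforced by WF) -/

inductive HCtx : Type
  | hole : HCtx
  | appL : HCtx → Term → HCtx
  | appR : Term → HCtx → HCtx

namespace HCtx

/-- Well-formedness: in i H, the left part i must be an inert term. -/
def WF : HCtx → Prop
  | hole => True
  | appL H _ => WF H
  | appR i H => Term.Inert i ∧ WF H

def plug : HCtx → Term → Term
  | hole, t => t
  | appL H u, t => Term.app (plug H t) u
  | appR i H, t => Term.app i (plug H t)

def nv : HCtx → Finset ℕ
  | hole => ∅
  | appL H _ => nv H
  | appR i H => Term.nv i ∪ nv H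

def anv : HCtx → Finset ℕ
  | hole => ∅
  | appL H _ => anv H
  | appR i H => Term.anv i ∪ anv H

def unv : HCtx → Finset ℕ
  | hole => ∅
  | appL H _ => unv H
  | appR i H => Term.unv i ∪ unv H

end HCtx

/-- Applicative term contexts H@ ::= ⟨·⟩ t | H@ t | i H@. -/
inductive HCtx.IsApp : HCtx → Prop
  | base (t : Term) : HCtx.IsApp (HCtx.appL HCtx.hole t)
  | appL {H : HCtx} (t : Term) : HCtx.IsApp H → HCtx.IsApp (HCtx.appL H t)
  | appR {H : HCtx} {i : Term} : Term.Inert i → HCtx.IsApp H → HCtx.IsApp (HCtx.appR i H)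

/-! ## Program contexts: hole in the term part (tc) or inside an ES (ec) -/

inductive PCtx : Type
  | tc : HCtx → Env → PCtx
  | ec : Term → Env → ℕ → HCtx → Env → PCtx

namespace PCtx

/-- P@[x←u] : appending an explicit substitution at the end of the environment of P. -/
def appES : PCtx → ℕ → Term → PCtx
  | tc H E, x, u => tc H (E ++ [(x, u)])
  | ec t E1 y H E2, x, u => ec t E1 y H (E2 ++ [(x, u)])

/-- Plugging a term into a program context. -/
def plugT : PCtx → Term → Program
  | tc H E, t => ⟨H.plug t, E⟩
  | ec u E1 x H E2, t => ⟨u, E1 ++ (x, H.plug t) :: E2⟩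

/-- Plugging a program into a program context: the plugged environment is appended
right after the position of the hole. -/
def plugP : PCtx → Program → Program
  | tc H E, q => ⟨H.plug q.tm, q.env ++ E⟩
  | ec u E1 x H E2, q => ⟨u, E1 ++ (x, H.plug q.tm) :: (q.env ++ E2)⟩

/-- Variables bound by the environment of P. -/
def dom : PCtx → Finset ℕ
  | tc _ E => Env.dom E
  | ec _ E1 y _ E2 => insert y (Env.dom E1 ∪ Env.dom E2)

/-- P(x): content of the leftmost explicit substitution on x occurring after the hole. -/
def lookup : PCtx → ℕ → Option Term
  | tc _ E, x => Env.lookupES E x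
  | ec _ _ _ _ E2, x => Env.lookupES E2 x

/-- (P⟨x⟩)@[x←H] : plug the variable x in the hole of P and append the ES [x←H],
whose content H now contains the hole. -/
def hered (P : PCtx) (x : ℕ) (H : HCtx) : PCtx :=
  ec (P.plugT (Term.var x)).tm (P.plugT (Term.var x)).env x H []

end PCtx

/-! ## Open CbNeed evaluation contexts P ∈ E_V -/

inductive OEC : PCtx → Finset ℕ → Prop
  | ax {H : HCtx} : H.WF → OEC (PCtx.tc H []) H.nv
  | gc {P : PCtx} {V : Finset ℕ} {x : ℕ} (t : Term) :
      OEC P V → x ∉ V → x ∉ P.dom → OEC (P.appES x t) V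
  | inert {P : PCtx} {V : Finset ℕ} {x : ℕ} {i : Term} :
      OEC P V → x ∈ V → Term.Inert i → x ∉ P.dom →
      OEC (P.appES x i) ((V.erase x) ∪ i.nv)
  | her {P : PCtx} {V : Finset ℕ} {x : ℕ} {H : HCtx} :
      OEC P V → x ∉ V → x ∉ P.dom → H.WF →
      OEC (P.hered x H) (V ∪ H.nv)

/-! ## Open CbNeed reduction -/

inductive StepOM : Program → Program → Prop
  | mk {P : PCtx} {V : Finset ℕ} {x : ℕ} {t u : Term} :
      OEC P V →
      StepOM (P.plugT (Term.app (Term.lam x t) u)) (P.plugP ⟨t, [(x, u)]⟩)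

inductive StepOE : Program → Program → Prop
  | mk {P : PCtx} {V : Finset ℕ} {x : ℕ} {v : Term} :
      OEC P V → P.lookup x = some v → v.IsValue →
      StepOE (P.plugT (Term.var x)) (P.plugT v)

def StepOnd (p q : Program) : Prop := StepOM p q ∨ StepOE p q

/-! ## Open CbNeed normal programs -/

inductive PInert : Program → Prop
  | ax {i : Term} : i.Inert → PInert ⟨i, []⟩
  | inert {p : Program} {x : ℕ} {i : Term} :
      PInert p → x ∈ p.nv → i.Inert → PInert (p.appES x i)
  | gc {p : Program} {x : ℕ} (t : Term) :
      PInert p → x ∉ p.nv → PInert (p.appES x t)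

inductive PAbs : Program → Prop
  | ax {v : Term} : v.IsValue → PAbs ⟨v, []⟩
  | gc {p : Program} {x : ℕ} (t : Term) : PAbs p → PAbs (p.appES x t)

def ONorm (p : Program) : Prop := PInert p ∨ PAbs p

/-! ## Useful Open CbNeed: multiplicative and exponential evaluation contexts -/

def upd (S : Finset ℕ) (x y : ℕ) : Finset ℕ := if x ∈ S then (S.erase x) ∪ {y} else S

inductive MEC : PCtx → Finset ℕ → Finset ℕ → Prop
  | ax {H : HCtx} : H.WF → MEC (PCtx.tc H []) H.unv H.anv
  | var {P : PCtx} {U A : Finset ℕ} {x y : ℕ} :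
      MEC P U A → x ∈ U ∪ A → x ∉ P.dom →
      MEC (P.appES x (Term.var y)) (upd U x y) (upd A x y)
  | gc {P : PCtx} {U A : Finset ℕ} {x : ℕ} (t : Term) :
      MEC P U A → x ∉ U ∪ A → x ∉ P.dom → MEC (P.appES x t) U A
  | inert {P : PCtx} {U A : Finset ℕ} {x : ℕ} {i : Term} :
      MEC P U A → x ∈ U ∪ A → i.InertPlus → x ∉ P.dom →
      MEC (P.appES x i) ((U.erase x) ∪ i.unv) ((A.erase x) ∪ i.anv)
  | val {P : PCtx} {U A : Finset ℕ} {x : ℕ} {v : Term} :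
      MEC P U A → x ∈ U → x ∉ A → v.IsValue → x ∉ P.dom →
      MEC (P.appES x v) (U.erase x) A
  | her {P : PCtx} {U A : Finset ℕ} {x : ℕ} {H : HCtx} :
      MEC P U A → x ∉ U ∪ A → x ∉ P.dom → H.WF →
      MEC (P.hered x H) (U ∪ H.unv) (A ∪ H.anv)

/-- Exponential evaluation contexts P ∈ E@_{U,A}; the last (natural number) index
counts the number of applications of rule (e_NA) in the derivation. -/
inductive EEC : PCtx → Finset ℕ → Finset ℕ → ℕ → Prop
  | ax1 {H : HCtx} : H.IsApp → EEC (PCtx.tc H []) H.unv H.anv 0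
  | ax2 {P : PCtx} {U A : Finset ℕ} {x : ℕ} {H : HCtx} :
      MEC P U A → x ∉ U ∪ A → x ∉ P.dom → H.IsApp →
      EEC (P.hered x H) ((U.erase x) ∪ H.unv) (A ∪ H.anv) 0
  | var {P : PCtx} {U A : Finset ℕ} {k : ℕ} {x y : ℕ} :
      EEC P U A k → x ∈ U ∪ A → x ∉ P.dom →
      EEC (P.appES x (Term.var y)) (upd U x y) (upd A x y) k
  | inert {P : PCtx} {U A : Finset ℕ} {k : ℕ} {x : ℕ} {i : Term} :
      EEC P U A k → x ∈ U ∪ A → i.InertPlus → x ∉ P.dom →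
      EEC (P.appES x i) ((U.erase x) ∪ i.unv) ((A.erase x) ∪ i.anv) k
  | gc {P : PCtx} {U A : Finset ℕ} {k : ℕ} {x : ℕ} (t : Term) :
      EEC P U A k → x ∉ U ∪ A → x ∉ P.dom → EEC (P.appES x t) U A k
  | val {P : PCtx} {U A : Finset ℕ} {k : ℕ} {x : ℕ} {v : Term} :
      EEC P U A k → x ∈ U → x ∉ A → v.IsValue → x ∉ P.dom →
      EEC (P.appES x v) (U.erase x) A k
  | na {P : PCtx} {U A : Finset ℕ} {k : ℕ} {x : ℕ} :
      EEC P U A k → x ∉ A → x ∉ P.dom →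
      EEC (P.hered x HCtx.hole) (U.erase x) A (k + 1)

/-! ## Useful Open CbNeed reduction -/

inductive StepUM : Program → Program → Prop
  | mk {P : PCtx} {U A : Finset ℕ} {x : ℕ} {t u : Term} :
      MEC P U A →
      StepUM (P.plugT (Term.app (Term.lam x t) u)) (P.plugP ⟨t, [(x, u)]⟩)

inductive StepUE : Program → Program → Prop
  | mk {P : PCtx} {U A : Finset ℕ} {k : ℕ} {x : ℕ} {v : Term} :
      EEC P U A k → P.lookup x = some v → v.IsValue →
      StepUE (P.plugT (Term.var x)) (P.plugT v)

def StepUnd (p q : Program) : Prop := StepUM p q ∨ StepUE p q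

/-- Useful multiplicative steps whose evaluation context lies in Em_{U,A}. -/
def StepUMat (U A : Finset ℕ) (p q : Program) : Prop :=
  ∃ (P : PCtx) (x : ℕ) (t u : Term), MEC P U A ∧
    p = P.plugT (Term.app (Term.lam x t) u) ∧ q = P.plugP ⟨t, [(x, u)]⟩

/-- Useful exponential steps whose evaluation context lies in E@_{U,A}. -/
def StepUEat (U A : Finset ℕ) (p q : Program) : Prop :=
  ∃ (P : PCtx) (k : ℕ) (x : ℕ) (v : Term), EEC P U A k ∧
    P.lookup x = some v ∧ v.IsValue ∧
    p = P.plugT (Term.var x) ∧ q = P.plugT v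

/-! ## Useful normal-form predicates -/

inductive GenVar : ℕ → Program → Prop
  | ax (x : ℕ) : GenVar x ⟨Term.var x, []⟩
  | her {x : ℕ} {p : Program} (y : ℕ) : GenVar x p → GenVar y (p.appES x (Term.var y))
  | gc {x z : ℕ} {p : Program} (t : Term) : GenVar x p → z ≠ x → GenVar x (p.appES z t)

inductive UfAbs : Program → Prop
  | ax {v : Term} : v.IsValue → UfAbs ⟨v, []⟩
  | gv {p : Program} {x : ℕ} {v : Term} : GenVar x p → v.IsValue → UfAbs (p.appES x v)
  | gc {p : Program} {x : ℕ} (t : Term) : UfAbs p → UfAbs (p.appES x t)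

inductive UfInert : Program → Prop
  | ax {i : Term} : i.InertPlus → UfInert ⟨i, []⟩
  | gv {p : Program} {x : ℕ} {i : Term} : GenVar x p → i.InertPlus → UfInert (p.appES x i)
  | inert {p : Program} {x : ℕ} {i : Term} :
      UfInert p → x ∈ p.nv → i.Inert → UfInert (p.appES x i)
  | useless {p : Program} {x : ℕ} {v : Term} :
      UfInert p → x ∈ p.unv → x ∉ p.anv → v.IsValue → UfInert (p.appES x v)
  | gc {p : Program} {x : ℕ} (t : Term) : UfInert p → x ∉ p.nv → UfInert (p.appES x t)

def UfNorm (p : Program) : Prop := UfInert p ∨ UfAbs p ∨ ∃ x, GenVar x p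

/-! ## The size-exploding family -/

/-- t₁ := λx.λy. y x x  (x := 0, y := 1). -/
def t1 : Term := Term.lam 0 (Term.lam 1 (Term.app (Term.app (Term.var 1) (Term.var 0)) (Term.var 0)))

/-- λy. y x x. -/
def tbody : Term := Term.lam 1 (Term.app (Term.app (Term.var 1) (Term.var 0)) (Term.var 0))

/-- The family t_n (values for n ≥ 1; tfam 0 is a dummy). -/
def tfam : ℕ → Term
  | 0 => t1
  | 1 => t1
  | n + 2 => Term.lam 0 (Term.app (tfam (n + 1)) tbody)

/-- I := λz.z. -/
def Idt : Term := Term.lam 2 (Term.var 2)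

/-- The family u_n : u₀ = I, u_{n+1} = λy. y u_n u_n. -/
def ufam : ℕ → Term
  | 0 => Idt
  | n + 1 => Term.lam 1 (Term.app (Term.app (Term.var 1) (ufam n)) (ufam n))

def StU (U A : Finset ℕ) (z : ℕ) (t : Term) (U' A' : Finset ℕ) : Prop :=
  (z ∈ U ∪ A ∧ (∃ y, t = Term.var y ∧ U' = upd U z y ∧ A' = upd A z y)) ∨
  (z ∉ U ∪ A ∧ U' = U ∧ A' = A) ∨
  (z ∈ U ∪ A ∧ (∃ a b, t = Term.app a b) ∧ U' = (U.erase z) ∪ t.unv ∧ A' = (A.erase z) ∪ t.anv) ∨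
  (z ∈ U ∧ z ∉ A ∧ (∃ a b, t = Term.lam a b) ∧ U' = U.erase z ∧ A' = A)

inductive MECb : PCtx → Finset ℕ → Finset ℕ → Prop
  | ax {H : HCtx} : H.WF → MECb (PCtx.tc H []) H.unv H.anv
  | st {P : PCtx} {U A U' A' : Finset ℕ} {z : ℕ} {t : Term} :
      MECb P U A → z ∉ P.dom → StU U A z t U' A' → MECb (P.appES z t) U' A'
  | her {P : PCtx} {U A : Finset ℕ} {x : ℕ} {H : HCtx} :
      MECb P U A → x ∉ U ∪ A → x ∉ P.dom → H.WF →
      MECb (P.hered x H) (U ∪ H.unv) (A ∪ H.anv)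

theorem inertPlus_app {i : Term} (h : i.InertPlus) : ∃ a b, i = Term.app a b := by
  obtain ⟨h1, h2⟩ := h
  cases h1 with
  | var x => exact absurd rfl (h2 x)
  | app _ _ => exact ⟨_, _, rfl⟩

theorem MEC.toB {P U A} (h : MEC P U A) : MECb P U A := by
  induction h with
  | ax h => exact .ax h
  | var _ h1 h2 ih => exact .st ih h2 (Or.inl ⟨h1, _, rfl, rfl, rfl⟩)
  | gc t _ h1 h2 ih => exact .st ih h2 (Or.inr (Or.inl ⟨h1, rfl, rfl⟩))
  | inert _ h1 hi h2 ih =>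
    exact .st ih h2 (Or.inr (Or.inr (Or.inl ⟨h1, inertPlus_app hi, rfl, rfl⟩)))
  | val _ h1 h1' hv h2 ih => exact .st ih h2 (Or.inr (Or.inr (Or.inr ⟨h1, h1', hv, rfl, rfl⟩)))
  | her _ h1 h2 h3 ih => exact .her ih h1 h2 h3

theorem Term.mem_nv (x : ℕ) (t : Term) : x ∈ t.nv ↔ x ∈ t.unv ∪ t.anv := by
  induction t with
  | var y => simp [nv, unv, anv]
  | lam y t _ => simp [nv, unv, anv]
  | app t u ih1 ih2 =>
    cases t <;> simp only [nv, unv, anv, Finset.mem_union, Finset.mem_insert,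
      Finset.mem_singleton, Finset.notMem_empty] at * <;> tauto

theorem HCtx.mem_nv (x : ℕ) (H : HCtx) : x ∈ H.nv ↔ x ∈ H.unv ∪ H.anv := by
  induction H with
  | hole => simp [nv, unv, anv]
  | appL H t ih => simpa [nv, unv, anv] using ih
  | appR i H ih =>
    have := Term.mem_nv x i
    simp only [nv, unv, anv, Finset.mem_union] at *
    tauto

theorem HCtx.plug_nv (x : ℕ) (H : HCtx) : x ∈ (H.plug (Term.var x)).nv := by
  induction H with
  | hole => simp [plug, Term.nv]
  | appL H t ih => simp [plug, Term.nv, ih]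
  | appR i H ih => simp [plug, Term.nv, ih]

theorem HCtx.plug_not_lam (x : ℕ) (H : HCtx) (a b) : H.plug (Term.var x) ≠ Term.lam a b := by
  cases H <;> simp [plug]

theorem HCtx.plug_eq (x x' : ℕ) (H H' : HCtx)
    (h : H.plug (Term.var x) = H'.plug (Term.var x')) :
    (H = H' ∧ x = x') ∨ x ∈ H'.nv ∨ x' ∈ H.nv := by
  induction H generalizing H' with
  | hole => cases H' <;> simp_all [plug]
  | appL H t ih =>
    cases H' with
    | hole => simp [plug] at h
    | appL H' t' =>
      simp only [plug, Term.app.injEq] at h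
      rcases ih _ h.1 with ⟨a, b⟩ | a | a <;> simp_all [nv]
    | appR i H' =>
      simp only [plug, Term.app.injEq] at h
      have := plug_nv x H
      simp_all [nv]
  | appR i H ih =>
    cases H' with
    | hole => simp [plug] at h
    | appL H' t' =>
      simp only [plug, Term.app.injEq] at h
      have := plug_nv x' H'
      simp_all [nv]
    | appR i H' =>
      simp only [plug, Term.app.injEq] at h
      rcases ih _ h.2 with ⟨a, b⟩ | a | a <;> simp_all [nv]

theorem PCtx.plugT_appES (P : PCtx) (z t s) :
    (P.appES z t).plugT s = (P.plugT s).appES z t := by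
  cases P <;> simp [appES, plugT, Program.appES]

theorem PCtx.plugT_hered (P : PCtx) (z H s) :
    (P.hered z H).plugT s = (P.plugT (Term.var z)).appES z (H.plug s) := by
  simp [hered, plugT, Program.appES]

theorem Program.appES_inj {p q : Program} {z z' t t'} (h : p.appES z t = q.appES z' t') :
    p = q ∧ z = z' ∧ t = t' := by
  cases p; cases q
  simp [Program.appES] at h ⊢
  grind

theorem Program.appES_ne {p : Program} {z t u} : p.appES z t ≠ ⟨u, []⟩ := by
  simp [Program.appES]

theorem PCtx.dom_appES (P : PCtx) (z t) : (P.appES z t).dom = insert z P.dom := by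
  cases P <;> ext a <;> simp [appES, dom, Env.dom] <;> grind

theorem PCtx.dom_hered (P : PCtx) (z H) : (P.hered z H).dom = insert z P.dom := by
  cases P <;> ext a <;> simp [hered, plugT, dom, Env.dom] <;> grind

theorem PCtx.appES_inj {P Q : PCtx} {z z' t t'} (h : P.appES z t = Q.appES z' t') :
    P = Q ∧ z = z' ∧ t = t' := by
  cases P <;> cases Q <;> simp [appES] at h ⊢ <;> grind

theorem PCtx.hered_ne {P Q : PCtx} {z z' t H} : P.appES z t ≠ Q.hered z' H := by
  cases P <;> simp [appES, hered]

theorem StU.det {U A z t U1 A1 U2 A2} (h : StU U A z t U1 A1) (h' : StU U A z t U2 A2) :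
    U1 = U2 ∧ A1 = A2 := by
  unfold StU at *
  grind

theorem StU.pres {U A z t U1 A1 x} (h : StU U A z t U1 A1) (hx : x ∈ U ∪ A) (hz : x ≠ z) :
    x ∈ U1 ∪ A1 := by
  unfold StU upd at *
  grind

theorem StU.hit {U A z H U1 A1 x} (h : StU U A z (HCtx.plug H (Term.var x)) U1 A1)
    (hz : z ∈ U ∪ A) : x ∈ U1 ∪ A1 := by
  have h1 := HCtx.plug_nv x H
  have h2 := HCtx.plug_not_lam x H
  generalize H.plug (Term.var x) = t at *
  rcases h with ⟨_, y, rfl, rfl, rfl⟩ | ⟨h, _⟩ | ⟨_, _, rfl, rfl⟩ | ⟨_, _, ⟨a, b, h⟩, _⟩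
  · simp only [Term.nv, Finset.mem_singleton] at h1
    subst h1
    unfold upd
    grind
  · exact absurd hz h
  · rw [Term.mem_nv] at h1
    grind
  · exact absurd h (h2 a b)

theorem MECb.plug_eq {P U A} (h : MECb P U A) : ∀ {P' U' A' x x'}, MECb P' U' A' →
    P.plugT (Term.var x) = P'.plugT (Term.var x') → x ∉ P.dom → x' ∉ P'.dom →
    (P = P' ∧ x = x') ∨ x ∈ U' ∪ A' ∨ x' ∈ U ∪ A := by
  induction h with
  | @ax H hw =>
    intro P' U' A' x x' h' e hx hx'
    cases h' with
    | @ax H' hw' =>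
      simp only [PCtx.plugT, Program.mk.injEq, and_true] at e
      rw [← HCtx.mem_nv, ← HCtx.mem_nv]
      rcases HCtx.plug_eq _ _ _ _ e with ⟨rfl, rfl⟩ | a | a <;> simp [*]
    | st h1 h2 h3 => rw [PCtx.plugT_appES] at e; exact absurd e.symm Program.appES_ne
    | her h1 h2 h3 => rw [PCtx.plugT_hered] at e; exact absurd e.symm Program.appES_ne
  | @st P U A U1 A1 z t h0 hz hs ih =>
    intro P' U' A' x x' h' e hx hx'
    rw [PCtx.plugT_appES] at e
    rw [PCtx.dom_appES, Finset.mem_insert, not_or] at hx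
    cases h' with
    | ax hw' => exact absurd e Program.appES_ne
    | st h1 h2 h3 =>
      rw [PCtx.plugT_appES] at e
      rw [PCtx.dom_appES, Finset.mem_insert, not_or] at hx'
      obtain ⟨e0, rfl, rfl⟩ := Program.appES_inj e
      rcases ih h1 e0 hx.2 hx'.2 with ⟨rfl, rfl⟩ | a | a
      · simp
      · exact Or.inr (Or.inl (h3.pres a hx.1))
      · exact Or.inr (Or.inr (hs.pres a hx'.1))
    | her h1 h2 h3 h4 =>
      rw [PCtx.plugT_hered] at e
      obtain ⟨e0, rfl, rfl⟩ := Program.appES_inj e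
      rcases ih h1 e0 hx.2 h3 with ⟨rfl, rfl⟩ | a | a
      · exact absurd rfl hx.1
      · right; left; grind
      · exact Or.inr (Or.inr (hs.hit a))
  | @her P U A z H h0 hzU hz hw ih =>
    intro P' U' A' x x' h' e hx hx'
    rw [PCtx.plugT_hered] at e
    rw [PCtx.dom_hered, Finset.mem_insert, not_or] at hx
    cases h' with
    | ax hw' => exact absurd e Program.appES_ne
    | st h1 h2 h3 =>
      rw [PCtx.plugT_appES] at e
      rw [PCtx.dom_appES, Finset.mem_insert, not_or] at hx'
      obtain ⟨e0, rfl, rfl⟩ := Program.appES_inj e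
      rcases ih h1 e0 hz hx'.2 with ⟨rfl, rfl⟩ | a | a
      · exact absurd rfl hx'.1
      · exact Or.inr (Or.inl (h3.hit a))
      · right; right; grind
    | @her P' U' A' z' H' h1 h2 h3 h4 =>
      rw [PCtx.plugT_hered] at e
      obtain ⟨e0, rfl, e2⟩ := Program.appES_inj e
      rcases ih h1 e0 hz h3 with ⟨rfl, _⟩ | a | a
      · have k1 := HCtx.mem_nv x H'
        have k2 := HCtx.mem_nv x' H
        rcases HCtx.plug_eq _ _ _ _ e2 with ⟨rfl, rfl⟩ | a | a
        · simp
        · right; left; grind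
        · right; right; grind
      · exact absurd a h2
      · exact absurd a hzU

theorem MECb.uniq {P U A} (h : MECb P U A) : ∀ {U' A'}, MECb P U' A' → U = U' ∧ A = A' := by
  induction h with
  | @ax H hw =>
    intro U' A' h'
    generalize hQ : PCtx.tc H [] = Q at h'
    cases h' with
    | ax _ => cases hQ; simp
    | @st P' _ _ _ _ _ _ _ _ _ => cases P' <;> simp [PCtx.appES] at hQ
    | her _ _ _ _ => simp [PCtx.hered] at hQ
  | @st P U A U1 A1 z t h0 hz hs ih =>
    intro U' A' h'
    generalize hQ : P.appES z t = Q at h'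
    cases h' with
    | ax _ => cases P <;> simp [PCtx.appES] at hQ
    | st h1 h2 h3 =>
      obtain ⟨rfl, rfl, rfl⟩ := PCtx.appES_inj hQ
      obtain ⟨rfl, rfl⟩ := ih h1
      exact hs.det h3
    | her _ _ _ _ => exact absurd hQ PCtx.hered_ne
  | @her P U A z H h0 hzU hz hw ih =>
    intro U' A' h'
    generalize hQ : P.hered z H = Q at h'
    cases h' with
    | ax _ => simp [PCtx.hered] at hQ
    | st h1 h2 h3 => exact absurd hQ.symm PCtx.hered_ne
    | @her P' U' A' z' H' h1 h2 h3 h4 =>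
      have hQ' := hQ
      simp only [PCtx.hered, PCtx.ec.injEq] at hQ'
      obtain ⟨e1, e2, rfl, rfl, _⟩ := hQ'
      have e : P.plugT (Term.var z) = P'.plugT (Term.var z) := by
        revert e1 e2
        cases P.plugT (Term.var z); cases P'.plugT (Term.var z)
        simp +contextual
      rcases h0.plug_eq h1 e hz h3 with ⟨rfl, _⟩ | a | a
      · obtain ⟨rfl, rfl⟩ := ih h1
        simp
      · exact absurd a h2
      · exact absurd a hzU

/-- unique parameterization of multiplicative evaluation contexts. -/
theorem MEC_unique_parameterization :
    ∀ (P : PCtx) (U A U' A' : Finset ℕ), MEC P U A → MEC P U' A' → U = U' ∧ A = A' := by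
  intro P U A U' A' h h'
  exact h.toB.uniq h'.toB
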